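/- arXiv:1709.08651 — 2 statements merged into one kernel-verified Lean document; each statement's English description precedes it below -/
import Mathlib

section
/- There exist a constant C > 0 and an integer N₀ such that for every N ≥ N₀ and every index 0 ≤ j < N: |ρ_j(N)| ≤ C·a^{-(L-j)}/(j+1) if 0 ≤ j < L; |ρ_j(N)| ≤ C/L if L ≤ j < K; and |ρ_j(N)| ≤ C·(1/(N−j) + a^{-(N−j)}) if K ≤ j < N. In particular, ρ_{j(N)}(N) → 0 as N → ∞ for every index sequence j(N) with N − j(N) → ∞. -/
open Filter Matrix

/-- Hankelization (diagonal averaging): the `j`-th value is the average of the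
entries `Y i k` with `i + k = j`. -/
noncomputable def hankelize {L K : ℕ} (Y : Matrix (Fin L) (Fin K) ℝ) (j : ℕ) : ℝ :=
  (∑ i : Fin L, ∑ k : Fin K, if (i : ℕ) + (k : ℕ) = j then Y i k else 0) /
  (∑ i : Fin L, ∑ k : Fin K, if (i : ℕ) + (k : ℕ) = j then (1 : ℝ) else 0)

/-- The `L × K` Hankel (trajectory) matrix of a series `x`. -/
noncomputable def hankelOf (x : ℕ → ℝ) (L K : ℕ) : Matrix (Fin L) (Fin K) ℝ :=
  Matrix.of fun i k => x ((i : ℕ) + (k : ℕ))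

/-- Squared Euclidean norm of a vector. -/
noncomputable def normSq {M : ℕ} (w : Fin M → ℝ) : ℝ := ∑ i, w i ^ 2

/-- `u` is a unit eigenvector of `A` corresponding to its largest eigenvalue. -/
def IsTopEigenvector {L : ℕ} (A : Matrix (Fin L) (Fin L) ℝ) (u : Fin L → ℝ) : Prop :=
  normSq u = 1 ∧ ∃ μ : ℝ, A.mulVec u = μ • u ∧
    ∀ (ν : ℝ) (v : Fin L → ℝ), v ≠ 0 → A.mulVec v = ν • v → ν ≤ μ

/-- The exponential signal `x_n = a^n`. -/
noncomputable def expSignal (a : ℝ) : ℕ → ℝ := fun n => a ^ n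

/-- The harmonic noise `e_n = cos (ξ n + φ)`. -/
noncomputable def cosNoise (ξ φ : ℝ) : ℕ → ℝ := fun n => Real.cos (ξ * (n : ℝ) + φ)

/-- The vector `W_M = (1, a, …, a^{M-1})ᵀ`. -/
noncomputable def Wvec (a : ℝ) (M : ℕ) : Fin M → ℝ := fun i => a ^ (i : ℕ)

/-- `ρ_j = (𝒮(P₀ E Hᵀ S₀ H))_j + (𝒮(P₀⊥ E))_j`. -/
noncomputable def rho (a ξ φ : ℝ) (L K : ℕ) (j : ℕ) : ℝ :=
  let H := hankelOf (expSignal a) L K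
  let E := hankelOf (cosNoise ξ φ) L K
  let P0perp : Matrix (Fin L) (Fin L) ℝ :=
    (normSq (Wvec a L))⁻¹ • Matrix.vecMulVec (Wvec a L) (Wvec a L)
  let P0 : Matrix (Fin L) (Fin L) ℝ := 1 - P0perp
  let S0 : Matrix (Fin L) (Fin L) ℝ :=
    ((normSq (Wvec a L)) ^ 2 * normSq (Wvec a K))⁻¹ • Matrix.vecMulVec (Wvec a L) (Wvec a L)
  hankelize (P0 * E * Hᵀ * S0 * H) j + hankelize (P0perp * E) j

/-- The matrix `H(δ)H(δ)ᵀ` for the perturbed series `a^n + δ cos(ξ n + φ)`. -/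
noncomputable def HdeltaSq (a ξ φ δ : ℝ) (L K : ℕ) : Matrix (Fin L) (Fin L) ℝ :=
  let Hδ := hankelOf (expSignal a) L K + δ • hankelOf (cosNoise ξ φ) L K
  Hδ * Hδᵀ

/-- The SSA reconstruction error `r_j = (𝒮(u uᵀ H(δ)))_j - a^j`. -/
noncomputable def recErr (a ξ φ δ : ℝ) (L K : ℕ) (u : Fin L → ℝ) (j : ℕ) : ℝ :=
  hankelize (Matrix.vecMulVec u u *
    (hankelOf (expSignal a) L K + δ • hankelOf (cosNoise ξ φ) L K)) j - a ^ j

open Finset in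
lemma geo_le (a : ℝ) (ha : 1 < a) (n : ℕ) : ∑ i ∈ range n, a ^ i ≤ a ^ n / (a - 1) := by
  rw [geom_sum_eq ha.ne']
  have : 0 < a - 1 := by linarith
  gcongr
  linarith

open Finset in
lemma geo_diag (a : ℝ) (ha : 1 < a) (L K j : ℕ) :
    (∑ k : Fin K, ∑ i : Fin L, if (i : ℕ) + (k : ℕ) = j then a ^ (k : ℕ) else 0)
      ≤ a ^ (min (j + 1) K) / (a - 1) := by
  have h1 : ∀ k : Fin K, (∑ i : Fin L, if (i : ℕ) + (k : ℕ) = j then a ^ (k : ℕ) else 0)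
      ≤ if (k : ℕ) < j + 1 then a ^ (k : ℕ) else 0 := by
    intro k
    have hp : (0 : ℝ) ≤ a ^ (k : ℕ) := by positivity
    split_ifs with hk
    · by_cases hL : j - k < L
      · rw [Finset.sum_eq_single (⟨j - k, hL⟩ : Fin L)]
        · split_ifs <;> simp [hp]
        · intro i _ hi
          rw [if_neg]
          intro h
          apply hi
          ext
          simp
          omega
        · simp
      · rw [Finset.sum_eq_zero]
        · exact hp
        · intro i _
          rw [if_neg]
          have := i.2
          omega
    · apply le_of_eq
      apply Finset.sum_eq_zero
      intro i _
      rw [if_neg]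
      omega
  refine (Finset.sum_le_sum fun k _ => h1 k).trans ?_
  rw [Fin.sum_univ_eq_sum_range (fun k => if k < j + 1 then a ^ k else (0 : ℝ)) K,
    ← Finset.sum_filter]
  refine le_trans (le_of_eq ?_) (geo_le a ha _)
  congr 1
  ext x
  simp
  omega

open Finset in
lemma diag_card (L K j s m : ℕ) (h1 : s + m ≤ L) (h2 : s + m ≤ j + 1) (h3 : j < s + K) :
    (m : ℝ) ≤ ∑ i : Fin L, ∑ k : Fin K, if (i : ℕ) + (k : ℕ) = j then (1 : ℝ) else 0 := by
  have hi : ∀ i : Fin L, (if (i : ℕ) ∈ Ico s (s + m) then (1 : ℝ) else 0) ≤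
      ∑ k : Fin K, if (i : ℕ) + (k : ℕ) = j then (1 : ℝ) else 0 := by
    intro i
    have hnn : ∀ k ∈ (univ : Finset (Fin K)),
      (0 : ℝ) ≤ if (i : ℕ) + (k : ℕ) = j then (1 : ℝ) else 0 := by
      intro k _; split_ifs <;> norm_num
    split_ifs with h
    · rw [Finset.mem_Ico] at h
      have hk : j - i < K := by omega
      refine le_trans ?_ (Finset.single_le_sum hnn (mem_univ (⟨j - i, hk⟩ : Fin K)))
      rw [if_pos]
      simp
      omega
    · exact Finset.sum_nonneg hnn
  refine le_trans ?_ (Finset.sum_le_sum fun i _ => hi i)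
  rw [Fin.sum_univ_eq_sum_range (fun i => if i ∈ Ico s (s + m) then (1 : ℝ) else 0) L,
    ← Finset.sum_filter]
  have : (range L).filter (fun i => i ∈ Ico s (s + m)) = Ico s (s + m) := by
    ext x
    simp
    omega
  rw [this]
  simp

open Finset in
lemma hankelize_bound (a : ℝ) (ha : 1 < a) (L K j : ℕ) (Y : Matrix (Fin L) (Fin K) ℝ)
    (p q r : ℝ) (hp : 0 ≤ p) (hq : 0 ≤ q) (m : ℝ) (hm : 0 < m)
    (hmD : m ≤ ∑ i : Fin L, ∑ k : Fin K, if (i : ℕ) + (k : ℕ) = j then (1 : ℝ) else 0)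
    (hY : ∀ (i : Fin L) (k : Fin K), (i : ℕ) + (k : ℕ) = j → |Y i k| ≤ p * a ^ (k : ℕ) + q * a ^ (i : ℕ) + r) :
    |hankelize Y j| ≤
      (p * (a ^ (min (j + 1) K) / (a - 1)) + q * (a ^ (min (j + 1) L) / (a - 1))) / m + r := by
  unfold hankelize
  set D := ∑ i : Fin L, ∑ k : Fin K, if (i : ℕ) + (k : ℕ) = j then (1 : ℝ) else 0 with hD
  have hDpos : 0 < D := lt_of_lt_of_le hm hmD
  have ha1 : 0 < a - 1 := by linarith
  rw [abs_div, abs_of_pos hDpos, div_le_iff₀ hDpos]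
  have h1 := geo_diag a ha L K j
  have h2 := geo_diag a ha K L j
  rw [Finset.sum_comm] at h1
  have e2 : ∀ i : Fin L, ∀ k : Fin K, ((k : ℕ) + (i : ℕ) = j) = ((i : ℕ) + (k : ℕ) = j) := by
    intro i k; rw [add_comm]
  simp only [e2] at h2
  have hsum : |∑ i : Fin L, ∑ k : Fin K, if (i : ℕ) + (k : ℕ) = j then Y i k else 0| ≤
      p * (∑ i : Fin L, ∑ k : Fin K, if (i : ℕ) + (k : ℕ) = j then a ^ (k : ℕ) else 0) +
      q * (∑ i : Fin L, ∑ k : Fin K, if (i : ℕ) + (k : ℕ) = j then a ^ (i : ℕ) else 0) +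
      r * D := by
    rw [hD]
    simp only [Finset.mul_sum, ← Finset.sum_add_distrib]
    refine (Finset.abs_sum_le_sum_abs _ _).trans (Finset.sum_le_sum fun i _ => ?_)
    refine (Finset.abs_sum_le_sum_abs _ _).trans (Finset.sum_le_sum fun k _ => ?_)
    split_ifs with h
    · simpa using hY i k h
    · simp
  have h3 := mul_le_mul_of_nonneg_left h1 hp
  have h4 := mul_le_mul_of_nonneg_left h2 hq
  set T := p * (a ^ (min (j + 1) K) / (a - 1)) + q * (a ^ (min (j + 1) L) / (a - 1)) with hT
  have hTn : 0 ≤ T := by positivity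
  have h5 : T ≤ T / m * D := by
    rw [div_mul_eq_mul_div, le_div_iff₀ hm]
    gcongr
  nlinarith

lemma normSq_lower (a : ℝ) (ha : 1 < a) (M : ℕ) (hM : 0 < M) :
    (a ^ M) ^ 2 / a ^ 2 ≤ normSq (Wvec a M) := by
  unfold normSq Wvec
  have h0 : 0 < a := by linarith
  have : (a ^ M) ^ 2 / a ^ 2 = (a ^ (M - 1)) ^ 2 := by
    obtain ⟨n, rfl⟩ : ∃ n, M = n + 1 := ⟨M - 1, by omega⟩
    rw [pow_succ a n, mul_pow]
    field_simp
    simp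
  rw [this]
  exact Finset.single_le_sum (f := fun i : Fin M => (a ^ (i : ℕ)) ^ 2)
    (fun i _ => sq_nonneg _) (Finset.mem_univ (⟨M - 1, by omega⟩ : Fin M))

lemma Wsum_le (a : ℝ) (ha : 1 < a) (M : ℕ) :
    ∑ i : Fin M, Wvec a M i ≤ a ^ M / (a - 1) := by
  unfold Wvec
  rw [Fin.sum_univ_eq_sum_range (fun i => a ^ i) M]
  exact geo_le a ha M

lemma rho_entry (a ξ φ : ℝ) (ha : 1 < a) (L K : ℕ) (hL : 0 < L) (hK : 0 < K) (j : ℕ) :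
    ∃ Y : Matrix (Fin L) (Fin K) ℝ, rho a ξ φ L K j = hankelize Y j ∧
      ∀ (i : Fin L) (k : Fin K), (i : ℕ) + (k : ℕ) = j → |Y i k| ≤
        (a ^ 2 / (a - 1) / a ^ K) * a ^ (k : ℕ) + (a ^ 2 / (a - 1) / a ^ L) * a ^ (i : ℕ)
          + a ^ 4 / (a - 1) ^ 2 * (a ^ j / a ^ (L + K)) := by
  have h0 : 0 < a := by linarith
  have ha1 : 0 < a - 1 := by linarith
  set w := Wvec a L with hw
  set v := Wvec a K with hv
  set nL := normSq w with hnL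
  set nK := normSq v with hnK
  set E := hankelOf (cosNoise ξ φ) L K with hE
  have hnLl : (a ^ L) ^ 2 / a ^ 2 ≤ nL := normSq_lower a ha L hL
  have hnKl : (a ^ K) ^ 2 / a ^ 2 ≤ nK := normSq_lower a ha K hK
  have hnLp : 0 < nL := lt_of_lt_of_le (by positivity) hnLl
  have hnKp : 0 < nK := lt_of_lt_of_le (by positivity) hnKl
  have hiL : nL⁻¹ ≤ a ^ 2 / (a ^ L) ^ 2 := by
    rw [← inv_div]; exact inv_anti₀ (by positivity) hnLl
  have hiK : nK⁻¹ ≤ a ^ 2 / (a ^ K) ^ 2 := by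
    rw [← inv_div]; exact inv_anti₀ (by positivity) hnKl
  have hwn : ∀ i, 0 ≤ w i := fun i => by rw [hw]; unfold Wvec; positivity
  have hvn : ∀ i, 0 ≤ v i := fun i => by rw [hv]; unfold Wvec; positivity
  have hEb : ∀ i k, |E i k| ≤ 1 := fun i k => by
    rw [hE]; unfold hankelOf cosNoise; simpa using Real.abs_cos_le_one _
  have hEv : ∀ i, |(E *ᵥ v) i| ≤ a ^ K / (a - 1) := by
    intro i
    refine le_trans ?_ (Wsum_le a ha K)
    simp only [Matrix.mulVec, dotProduct]
    refine (Finset.abs_sum_le_sum_abs _ _).trans (Finset.sum_le_sum fun k _ => ?_)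
    rw [abs_mul, abs_of_nonneg (hvn k)]
    exact mul_le_of_le_one_left (hvn k) (hEb i k)
  have hwE : ∀ k, |(w ᵥ* E) k| ≤ a ^ L / (a - 1) := by
    intro i
    refine le_trans ?_ (Wsum_le a ha L)
    simp only [Matrix.vecMul, dotProduct]
    refine (Finset.abs_sum_le_sum_abs _ _).trans (Finset.sum_le_sum fun k _ => ?_)
    rw [abs_mul, abs_of_nonneg (hwn k)]
    exact mul_le_of_le_one_right (hwn k) (hEb k i)
  have hwEv : |w ⬝ᵥ (E *ᵥ v)| ≤ a ^ L / (a - 1) * (a ^ K / (a - 1)) := by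
    refine le_trans ?_ (mul_le_mul_of_nonneg_right (Wsum_le a ha L) (by positivity))
    rw [Finset.sum_mul]
    refine (Finset.abs_sum_le_sum_abs _ _).trans (Finset.sum_le_sum fun k _ => ?_)
    rw [abs_mul, abs_of_nonneg (hwn k)]
    exact mul_le_mul_of_nonneg_left (hEv k) (hwn k)
  have hHe : hankelOf (expSignal a) L K = vecMulVec w v := by
    ext i k
    simp [hankelOf, expSignal, vecMulVec_apply, hw, hv, Wvec, pow_add]
  have hww : w ⬝ᵥ w = nL := by
    simp [dotProduct, hnL, normSq, sq]
  refine ⟨vecMulVec (nK⁻¹ • (E *ᵥ v - (nL⁻¹ * (w ⬝ᵥ (E *ᵥ v))) • w)) v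
    + vecMulVec (nL⁻¹ • w) (w ᵥ* E), ?_, ?_⟩
  · have hadd : ∀ A B : Matrix (Fin L) (Fin K) ℝ,
        hankelize A j + hankelize B j = hankelize (A + B) j := by
      intro A B
      unfold hankelize
      rw [← add_div, ← Finset.sum_add_distrib]
      congr 1
      apply Finset.sum_congr rfl; intro i _
      rw [← Finset.sum_add_distrib]
      apply Finset.sum_congr rfl; intro k _
      split_ifs <;> simp
    unfold rho
    simp only [hadd]
    congr 1
    rw [← hw, ← hv, ← hnL, ← hnK, ← hE, hHe, transpose_vecMulVec]
    congr 1
    · have : vecMulVec v w * ((nL ^ 2 * nK)⁻¹ • vecMulVec w w) * vecMulVec w v =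
          nK⁻¹ • vecMulVec v v := by
        simp only [Matrix.mul_smul, Matrix.smul_mul, vecMulVec_mul_vecMulVec, hww,
          vecMulVec_smul, smul_vecMulVec, smul_smul]
        congr 1
        field_simp
      rw [Matrix.mul_assoc, Matrix.mul_assoc, ← Matrix.mul_assoc (vecMulVec v w), this]
      rw [Matrix.mul_smul, mul_vecMulVec, smul_vecMulVec, ← Matrix.mulVec_mulVec]
      congr 2
      rw [Matrix.sub_mulVec, Matrix.one_mulVec, Matrix.smul_mulVec, vecMulVec_mulVec]
      ext i
      simp
      ring
    · rw [Matrix.smul_mul, vecMulVec_mul, smul_vecMulVec]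
  · intro i k hik
    have hYe : (vecMulVec (nK⁻¹ • (E *ᵥ v - (nL⁻¹ * (w ⬝ᵥ (E *ᵥ v))) • w)) v
        + vecMulVec (nL⁻¹ • w) (w ᵥ* E)) i k =
        nK⁻¹ * (E *ᵥ v) i * v k + nL⁻¹ * w i * (w ᵥ* E) k
          - nK⁻¹ * nL⁻¹ * (w ⬝ᵥ (E *ᵥ v)) * (w i * v k) := by
      simp [vecMulVec_apply]
      ring
    rw [hYe]
    refine (abs_sub _ _).trans (add_le_add ((abs_add_le _ _).trans (add_le_add ?_ ?_)) ?_)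
    · rw [abs_mul, abs_mul, abs_of_pos (inv_pos.2 hnKp), abs_of_nonneg (hvn k)]
      have : v k = a ^ (k : ℕ) := rfl
      rw [this]
      calc nK⁻¹ * |(E *ᵥ v) i| * a ^ (k : ℕ) ≤
            (a ^ 2 / (a ^ K) ^ 2) * (a ^ K / (a - 1)) * a ^ (k : ℕ) := by
              gcongr; exact hEv i
        _ = _ := by field_simp
    · rw [abs_mul, abs_mul, abs_of_pos (inv_pos.2 hnLp), abs_of_nonneg (hwn i)]
      have : w i = a ^ (i : ℕ) := rfl
      rw [this]
      calc nL⁻¹ * a ^ (i : ℕ) * |(w ᵥ* E) k| ≤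
            (a ^ 2 / (a ^ L) ^ 2) * a ^ (i : ℕ) * (a ^ L / (a - 1)) := by
              gcongr; exact hwE k
        _ = _ := by field_simp
    · have : w i * v k = a ^ j := by rw [← hik, pow_add]; rfl
      rw [this, abs_mul, abs_mul, abs_mul, abs_of_pos (inv_pos.2 hnLp),
        abs_of_pos (inv_pos.2 hnKp), abs_of_pos (by positivity : 0 < a ^ j)]
      calc nK⁻¹ * nL⁻¹ * |w ⬝ᵥ (E *ᵥ v)| * a ^ j ≤
            (a ^ 2 / (a ^ K) ^ 2) * (a ^ 2 / (a ^ L) ^ 2) *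
              (a ^ L / (a - 1) * (a ^ K / (a - 1))) * a ^ j := by
              gcongr
        _ = _ := by rw [pow_add]; field_simp

lemma rho_bound (a ξ φ : ℝ) (ha : 1 < a) (L K : ℕ) (hL : 0 < L) (hK : 0 < K) (j s m : ℕ)
    (hm : 0 < m) (h1 : s + m ≤ L) (h2 : s + m ≤ j + 1) (h3 : j < s + K) :
    |rho a ξ φ L K j| ≤
      a ^ 2 / (a - 1) ^ 2 * (a ^ (min (j + 1) K) / a ^ K + a ^ (min (j + 1) L) / a ^ L) / m
        + a ^ 4 / (a - 1) ^ 2 * (a ^ j / a ^ (L + K)) := by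
  have h0 : 0 < a := by linarith
  have ha1 : 0 < a - 1 := by linarith
  obtain ⟨Y, hY, hb⟩ := rho_entry a ξ φ ha L K hL hK j
  rw [hY]
  refine (hankelize_bound a ha L K j Y _ _ _ (by positivity) (by positivity) (m : ℝ)
    (by exact_mod_cast hm) (diag_card L K j s m h1 h2 h3) hb).trans (le_of_eq ?_)
  congr 2
  field_simp

lemma pow_inv_bound (a : ℝ) (ha : 1 < a) : ∃ B ≥ (1 : ℝ), ∀ n : ℕ, (n : ℝ) + 1 ≤ B * a ^ n := by
  have ha1 : 0 < a - 1 := by linarith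
  refine ⟨1 + 1 / (a - 1), by simp; linarith, fun n => ?_⟩
  have h := one_add_mul_sub_le_pow (by linarith : (-1 : ℝ) ≤ a) n
  have h' : (1 : ℝ) ≤ a ^ n := one_le_pow₀ ha.le
  have : (n : ℝ) ≤ 1 / (a - 1) * a ^ n := by
    rw [div_mul_eq_mul_div, le_div_iff₀ ha1]; linarith
  linarith

/-- Uniform bounds with natural powers. -/
lemma rho_all (a ξ φ : ℝ) (ha : 1 < a) : ∃ C > (0 : ℝ), ∀ L K N j : ℕ, 1 < L → L ≤ K →
    L + K = N + 1 → j < N →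
    (j < L → |rho a ξ φ L K j| ≤ C * (a ^ j / a ^ L) / ((j : ℝ) + 1)) ∧
    (L ≤ j → j < K → |rho a ξ φ L K j| ≤ C / (L : ℝ)) ∧
    (K ≤ j → |rho a ξ φ L K j| ≤ C * (1 / ((N : ℝ) - j) + a ^ j / a ^ N)) := by
  have h0 : 0 < a := by linarith
  have ha1 : 0 < a - 1 := by linarith
  obtain ⟨B, hB1, hB⟩ := pow_inv_bound a ha
  set A := a ^ 2 / (a - 1) ^ 2 with hA
  set F := a ^ 4 / (a - 1) ^ 2 with hF
  have hAp : 0 < A := by positivity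
  have hFp : 0 < F := by positivity
  have hle1 : ∀ j M : ℕ, a ^ (min (j + 1) M) / a ^ M ≤ 1 := by
    intro j M
    rw [div_le_one (by positivity)]
    exact pow_le_pow_right₀ ha.le (min_le_right _ _)
  refine ⟨2 * A * a + F * B + 2 * A, by positivity, ?_⟩
  intro L K N j hL hLK hN hj
  have hLp : (0 : ℝ) < L := by exact_mod_cast (by omega : 0 < L)
  refine ⟨fun h => ?_, fun h h' => ?_, fun h => ?_⟩
  · have hb := rho_bound a ξ φ ha L K (by omega) (by omega) j 0 (j + 1) (by omega) (by omega)
      (by omega) (by omega)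
    refine hb.trans ?_
    rw [min_eq_left (by omega), min_eq_left (by omega)]
    push_cast
    have hj1 : (0 : ℝ) < (j : ℝ) + 1 := by positivity
    have e1 : a ^ (j + 1) / a ^ K ≤ a * (a ^ j / a ^ L) := by
      rw [pow_succ, mul_comm, mul_div_assoc]
      gcongr
      exact ha.le
    have e2 : a ^ (j + 1) / a ^ L = a * (a ^ j / a ^ L) := by
      rw [pow_succ, mul_comm, mul_div_assoc]
    have e3 : a ^ j / a ^ (L + K) ≤ B * (a ^ j / a ^ L) / ((j : ℝ) + 1) := by
      have : (j : ℝ) + 1 ≤ B * a ^ K := by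
        refine le_trans ?_ (hB K)
        have : (j : ℝ) ≤ K := by exact_mod_cast (by omega : j ≤ K)
        linarith
      rw [le_div_iff₀ hj1, pow_add, div_mul_eq_mul_div, div_le_iff₀ (by positivity)]
      calc a ^ j * ((j : ℝ) + 1) ≤ a ^ j * (B * a ^ K) := by gcongr
        _ = _ := by field_simp
    set X := a ^ j / a ^ L with hX
    have hXp : 0 < X := by positivity
    rw [e2]
    calc _ ≤ A * (a * X + a * X) / ((j : ℝ) + 1) + F * (B * X / ((j : ℝ) + 1)) := by gcongr
      _ = (2 * A * a + F * B) * X / ((j : ℝ) + 1) := by ring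
      _ ≤ (2 * A * a + F * B + 2 * A) * X / ((j : ℝ) + 1) := by
        apply div_le_div_of_nonneg_right _ hj1.le
        apply mul_le_mul_of_nonneg_right _ hXp.le
        linarith
  · have hb := rho_bound a ξ φ ha L K (by omega) (by omega) j 0 L (by omega) (by omega)
      (by omega) (by omega)
    refine hb.trans ?_
    have e3 : a ^ j / a ^ (L + K) ≤ B / L := by
      have h1 : (L : ℝ) ≤ B * a ^ L := le_trans (by linarith) (hB L)
      have h2 : a ^ j ≤ a ^ K := pow_le_pow_right₀ ha.le h'.le
      rw [div_le_div_iff₀ (by positivity) hLp, pow_add]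
      calc a ^ j * L ≤ a ^ K * (B * a ^ L) := by gcongr
        _ = _ := by ring
    calc _ ≤ A * (1 + 1) / (L : ℝ) + F * (B / L) := by
          gcongr
          · exact hle1 j K
          · exact hle1 j L
      _ = (2 * A + F * B) / L := by ring
      _ ≤ _ := by
        apply div_le_div_of_nonneg_right _ hLp.le
        have : 0 < 2 * A * a := by positivity
        linarith
  · have hb := rho_bound a ξ φ ha L K (by omega) (by omega) j (j + 1 - K) (N - j) (by omega)
      (by omega) (by omega) (by omega)
    refine hb.trans ?_
    rw [Nat.cast_sub hj.le]
    have hNj : (0 : ℝ) < (N : ℝ) - j := by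
      have : (j : ℝ) < N := by exact_mod_cast hj
      linarith
    have e3 : a ^ j / a ^ (L + K) ≤ B * (a ^ j / a ^ N) := by
      have h1 : a ^ N ≤ a ^ (L + K) := pow_le_pow_right₀ ha.le (by omega)
      calc a ^ j / a ^ (L + K) ≤ a ^ j / a ^ N := by gcongr
        _ ≤ _ := le_mul_of_one_le_left (by positivity) hB1
    set X := a ^ j / a ^ N with hX
    have hXp : 0 < X := by positivity
    have hAa : 0 < 2 * A * a := by positivity
    have hFB : 0 < F * B := by positivity
    calc _ ≤ A * (1 + 1) / ((N : ℝ) - j) + F * (B * X) := by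
          gcongr
          · exact hle1 j K
          · exact hle1 j L
      _ = (2 * A) * (1 / ((N : ℝ) - j)) + (F * B) * X := by ring
      _ ≤ (2 * A * a + F * B + 2 * A) * (1 / ((N : ℝ) - j)) +
          (2 * A * a + F * B + 2 * A) * X := by
        gcongr <;> linarith
      _ = _ := by ring

lemma rho_tendsto_bound (a ξ φ : ℝ) (ha : 1 < a) : ∃ C > (0 : ℝ), ∀ L K N j : ℕ, 1 < L → L ≤ K →
    L + K = N + 1 → j < N →
    |rho a ξ φ L K j| ≤ C * (1 / (L : ℝ) + 1 / ((N : ℝ) - j)) := by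
  have h0 : 0 < a := by linarith
  obtain ⟨C, hC, hall⟩ := rho_all a ξ φ ha
  obtain ⟨B, hB1, hB⟩ := pow_inv_bound a ha
  have hinv : ∀ j M : ℕ, j < M → a ^ j / a ^ M ≤ B / ((M : ℝ) - j + 1) := by
    intro j M h
    obtain ⟨n, rfl⟩ : ∃ n, M = j + n := ⟨M - j, by omega⟩
    have := hB n
    push_cast
    rw [add_sub_cancel_left, div_le_div_iff₀ (by positivity) (by positivity), pow_add]
    calc a ^ j * ((n : ℝ) + 1) ≤ a ^ j * (B * a ^ n) := by gcongr
      _ = _ := by ring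
  refine ⟨C * (B + 1), by positivity, fun L K N j hL hLK hN hj => ?_⟩
  obtain ⟨c1, c2, c3⟩ := hall L K N j hL hLK hN hj
  have hLp : (0 : ℝ) < L := by exact_mod_cast (by omega : 0 < L)
  have hNj : (0 : ℝ) < (N : ℝ) - j := by
    have : (j : ℝ) < N := by exact_mod_cast hj
    linarith
  have hfin : ∀ x : ℝ, 0 < x → C * x ≤ C * (B + 1) * x := by
    intro x hx
    have : 0 < C * x := by positivity
    nlinarith
  by_cases h : j < L
  · refine (c1 h).trans ?_
    have hjL : (j : ℝ) < L := by exact_mod_cast h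
    have hj0 : (0 : ℝ) ≤ j := by positivity
    have hd : (0 : ℝ) < (L : ℝ) - j + 1 := by linarith
    have : C * (a ^ j / a ^ L) / ((j : ℝ) + 1) ≤ C * B * (1 / L) := by
      calc C * (a ^ j / a ^ L) / ((j : ℝ) + 1) ≤ C * (B / ((L : ℝ) - j + 1)) / ((j : ℝ) + 1) := by
            exact div_le_div_of_nonneg_right (mul_le_mul_of_nonneg_left (hinv j L h) hC.le) (by positivity)
        _ = C * B * (1 / (((L : ℝ) - j + 1) * ((j : ℝ) + 1))) := by field_simp
        _ ≤ _ := by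
          gcongr
          nlinarith
    have p1 : 0 < C * (1 / (L : ℝ)) := by positivity
    have p2 : 0 < C * (B + 1) * (1 / ((N : ℝ) - j)) := by positivity
    nlinarith
  · by_cases h' : j < K
    · refine (c2 (by omega) h').trans ?_
      have p1 := hfin (1 / (L : ℝ)) (by positivity)
      have p2 : 0 < C * (B + 1) * (1 / ((N : ℝ) - j)) := by positivity
      rw [div_eq_mul_one_div, mul_add]
      linarith
    · refine (c3 (by omega)).trans ?_
      have p1 : a ^ j / a ^ N ≤ B * (1 / ((N : ℝ) - j)) := by
        refine (hinv j N hj).trans ?_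
        rw [div_eq_mul_one_div]
        gcongr
        linarith
      have p2 : 0 < C * (B + 1) * (1 / (L : ℝ)) := by positivity
      have p3 := mul_le_mul_of_nonneg_left p1 hC.le
      nlinarith

/-- bounds on `ρ_j(N)` and `ρ_{j(N)}(N) → 0` whenever `N - j(N) → ∞`. -/
theorem stmt_0 (a ξ φ α : ℝ) (ha : 1 < a) (hξ : ξ ∈ Set.Ioo 0 Real.pi)
    (hφ : φ ∈ Set.Ico 0 (2 * Real.pi)) (hα : α ∈ Set.Ioo (0 : ℝ) 1)
    (L K : ℕ → ℕ)
    (hLK : ∀ N, 3 ≤ N → 1 < L N ∧ L N ≤ K N ∧ L N + K N = N + 1)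
    (hlim : Tendsto (fun N : ℕ => (L N : ℝ) / (N : ℝ)) atTop (nhds α)) :
    (∃ C > (0 : ℝ), ∃ N₀ : ℕ, ∀ N, N₀ ≤ N → ∀ j, j < N →
      (j < L N →
        |rho a ξ φ (L N) (K N) j| ≤ C * a ^ (-((L N : ℝ) - (j : ℝ))) / ((j : ℝ) + 1)) ∧
      (L N ≤ j → j < K N →
        |rho a ξ φ (L N) (K N) j| ≤ C / (L N : ℝ)) ∧
      (K N ≤ j →
        |rho a ξ φ (L N) (K N) j| ≤
          C * (1 / ((N : ℝ) - (j : ℝ)) + a ^ (-((N : ℝ) - (j : ℝ)))))) ∧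
    (∀ j : ℕ → ℕ, (∀ N, j N < N) →
      Tendsto (fun N : ℕ => (N : ℝ) - (j N : ℝ)) atTop atTop →
      Tendsto (fun N : ℕ => rho a ξ φ (L N) (K N) (j N)) atTop (nhds 0)) := by
  have h0 : 0 < a := by linarith
  have hpow : ∀ M j : ℕ, a ^ (-((M : ℝ) - (j : ℝ))) = a ^ j / a ^ M := by
    intro M j
    rw [neg_sub, Real.rpow_sub h0, Real.rpow_natCast, Real.rpow_natCast]
  constructor
  · obtain ⟨C, hC, hall⟩ := rho_all a ξ φ ha
    refine ⟨C, hC, 3, fun N hN j hj => ?_⟩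
    obtain ⟨h1, h2, h3⟩ := hLK N hN
    simp only [hpow]
    exact hall (L N) (K N) N j h1 h2 h3 hj
  · intro j hj hjt
    obtain ⟨C, hC, hall⟩ := rho_tendsto_bound a ξ φ ha
    have hLt : Tendsto (fun N : ℕ => (L N : ℝ)) atTop atTop := by
      have := hlim.pos_mul_atTop hα.1 (tendsto_natCast_atTop_atTop (R := ℝ))
      refine this.congr' ?_
      filter_upwards [eventually_gt_atTop 0] with N hN
      have : (N : ℝ) ≠ 0 := by exact_mod_cast hN.ne'
      field_simp
    have hb : Tendsto (fun N : ℕ => C * (1 / (L N : ℝ) + 1 / ((N : ℝ) - j N))) atTop (nhds 0) := by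
      have := ((tendsto_inv_atTop_zero.comp hLt).add (tendsto_inv_atTop_zero.comp hjt)).const_mul C
      simpa [Function.comp_def] using this
    refine squeeze_zero_norm' ?_ hb
    filter_upwards [eventually_ge_atTop 3] with N hN
    obtain ⟨h1, h2, h3⟩ := hLK N hN
    exact hall (L N) (K N) N (j N) h1 h2 h3 (hj N)
end

section
/- For every δ ∈ ℝ there exist a constant C > 0 and an integer N₀ such that for all N ≥ N₀, for every choice of a unit eigenvector u_N of H(δ)H(δ)ᵀ corresponding to its largest eigenvalue, and for every index 0 ≤ j < N: |r_j(N) − δ·ρ_j(N)| ≤ C·N²·a^{−N}. -/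
open Filter Matrix

open scoped InnerProductSpace in
lemma rayleigh_le_top {U : Type*} [NormedAddCommGroup U] [InnerProductSpace ℝ U]
    [FiniteDimensional ℝ U] (T : U →ₗ[ℝ] U) (hT : T.IsSymmetric) (μ : ℝ)
    (hμ : ∀ (ν : ℝ) (v : U), v ≠ 0 → T v = ν • v → ν ≤ μ) (x : U) :
    ⟪T x, x⟫_ℝ ≤ μ * ‖x‖ ^ 2 := by
  have hb := hT.eigenvectorBasis (rfl : Module.finrank ℝ U = Module.finrank ℝ U)
  set b := hT.eigenvectorBasis (rfl : Module.finrank ℝ U = Module.finrank ℝ U) with hbdef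
  have e1 : ∀ i, hT.eigenvalues rfl i ≤ μ := by
    intro i
    refine hμ _ (b i) (b.orthonormal.ne_zero i) ?_
    exact hT.apply_eigenvectorBasis rfl i
  have e2 : ⟪T x, x⟫_ℝ = ∑ i, hT.eigenvalues rfl i * ⟪b i, x⟫_ℝ ^ 2 := by
    rw [← b.sum_inner_mul_inner]
    refine Finset.sum_congr rfl fun i _ => ?_
    rw [hT x (b i), hT.apply_eigenvectorBasis rfl i]
    simp only [RCLike.ofReal_real_eq_id, id, inner_smul_right]
    rw [real_inner_comm]
    ring
  have e3 : ‖x‖ ^ 2 = ∑ i, ⟪b i, x⟫_ℝ ^ 2 := by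
    rw [← b.sum_sq_norm_inner_right x]
    simp
  rw [e2, e3, Finset.mul_sum]
  exact Finset.sum_le_sum fun i _ => mul_le_mul_of_nonneg_right (e1 i) (sq_nonneg _)

set_option maxHeartbeats 1000000 in
open scoped InnerProductSpace in
lemma core_bound {U V : Type*} [NormedAddCommGroup U] [InnerProductSpace ℝ U]
    [NormedAddCommGroup V] [InnerProductSpace ℝ V]
    (F : V →ₗ[ℝ] U) (G : U →ₗ[ℝ] V) (hFG : ∀ v u, ⟪F v, u⟫_ℝ = ⟪v, G u⟫_ℝ)
    (f h μ : ℝ) (hf : 0 ≤ f) (hh : 0 < h) (hfh : 2 * f ≤ h)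
    (hF : ∀ v, ‖F v‖ ≤ f * ‖v‖) (hG : ∀ v, ‖G v‖ ≤ f * ‖v‖)
    (w u : U) (z : V) (hw : ‖w‖ = 1) (hu : ‖u‖ = 1) (hz : ‖z‖ = 1)
    (B : V) (hB : B = (h * ⟪w, u⟫_ℝ) • z + G u)
    (hev : (h * ⟪z, B⟫_ℝ) • w + F B = μ • u) (hμ : (h - f) ^ 2 ≤ μ)
    (ei : U) (ek : V) (hei : ‖ei‖ ≤ 1) (hek : ‖ek‖ ≤ 1) :
    |⟪ei, u⟫_ℝ * ⟪B, ek⟫_ℝ - h * ⟪ei, w⟫_ℝ * ⟪z, ek⟫_ℝ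
      - (⟪ei, F z⟫_ℝ - ⟪ei, w⟫_ℝ * ⟪w, F z⟫_ℝ) * ⟪z, ek⟫_ℝ
      - ⟪ei, w⟫_ℝ * ⟪G w, ek⟫_ℝ| ≤ 74 * (f ^ 2 / h) := by
  have hμ4 : h ^ 2 / 4 ≤ μ := by nlinarith
  have hμ0 : 0 < μ := lt_of_lt_of_le (by positivity) hμ4
  have hww : ⟪w, w⟫_ℝ = 1 := by rw [real_inner_self_eq_norm_sq, hw]; norm_num
  have huu : ⟪u, u⟫_ℝ = 1 := by rw [real_inner_self_eq_norm_sq, hu]; norm_num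
  have hzz : ⟪z, z⟫_ℝ = 1 := by rw [real_inner_self_eq_norm_sq, hz]; norm_num
  set c := ⟪w, u⟫_ℝ with hc
  set q := u - c • w with hq
  have hcabs : |c| ≤ 1 := by
    have := abs_real_inner_le_norm w u
    rwa [hw, hu, one_mul] at this
  have hwq : ⟪w, q⟫_ℝ = 0 := by
    rw [hq, inner_sub_right, inner_smul_right, hww, ← hc]; ring
  have hu_eq : u = c • w + q := by rw [hq]; abel
  have hpyth : c ^ 2 + ‖q‖ ^ 2 = 1 := by
    have h1 : ⟪q, q⟫_ℝ = 1 - c ^ 2 := by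
      conv_lhs => rw [hq]
      rw [inner_sub_left, inner_sub_right, inner_sub_right, inner_smul_left, inner_smul_right,
        inner_smul_left, inner_smul_right, hww, huu, ← real_inner_comm u w, ← hc]
      simp; ring
    rw [real_inner_self_eq_norm_sq] at h1
    linarith
  have hq1 : ‖q‖ ≤ 1 := by
    have := norm_nonneg q
    nlinarith [sq_nonneg c]
  -- projection
  have projn : ∀ y : U, ‖y - ⟪w, y⟫_ℝ • w‖ ≤ ‖y‖ := by
    intro y
    have h1 : ‖y - ⟪w, y⟫_ℝ • w‖ ^ 2 = ‖y‖ ^ 2 - ⟪w, y⟫_ℝ ^ 2 := by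
      rw [norm_sub_sq_real, norm_smul, hw, inner_smul_right, ← real_inner_comm y w]
      simp; ring
    exact abs_le_of_sq_le_sq' (by nlinarith [sq_nonneg ⟪w, y⟫_ℝ]) (norm_nonneg _) |>.2
  set p := F z - ⟪w, F z⟫_ℝ • w with hp
  set g := F (G u) - ⟪w, F (G u)⟫_ℝ • w with hg
  have hpn : ‖p‖ ≤ f := by
    refine (projn _).trans ((hF z).trans ?_); rw [hz, mul_one]
  have hGu : ‖G u‖ ≤ f := by
    have := hG u; rwa [hu, mul_one] at this
  have hgn : ‖g‖ ≤ f ^ 2 := by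
    refine (projn _).trans ((hF _).trans ?_)
    nlinarith
  have hμq : μ • q = (h * c) • p + g := by
    have e : μ • q = μ • u - ⟪w, μ • u⟫_ℝ • w := by
      rw [hq, inner_smul_right, ← hc]; module
    rw [e, ← hev, hB]
    simp only [map_add, map_smul, inner_add_right, inner_smul_right, hww, hp, hg]
    module
  have hqn : ‖q‖ ≤ 6 * (f / h) := by
    have h1 : μ * ‖q‖ ≤ h * f + f ^ 2 := by
      calc μ * ‖q‖ = ‖μ • q‖ := by rw [norm_smul, Real.norm_of_nonneg hμ0.le]
        _ ≤ ‖(h * c) • p‖ + ‖g‖ := by rw [hμq]; exact norm_add_le _ _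
        _ ≤ h * f + f ^ 2 := by
          refine add_le_add ?_ hgn
          rw [norm_smul, Real.norm_eq_abs, abs_mul, abs_of_pos hh]
          have : h * |c| ≤ h := by nlinarith
          exact mul_le_mul this hpn (norm_nonneg _) hh.le
    have h2 : h ^ 2 / 4 * ‖q‖ ≤ μ * ‖q‖ := mul_le_mul_of_nonneg_right hμ4 (norm_nonneg _)
    rw [← mul_div_assoc, le_div_iff₀ hh]
    have h3 : h * (‖q‖ * h) ≤ h * (6 * f) := by nlinarith
    exact le_of_mul_le_mul_left h3 hh
  have hμc : |h ^ 2 * c ^ 2 - μ| ≤ 5 / 2 * (h * f) := by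
    have h1 : μ = ‖B‖ ^ 2 := by
      have e1 : ⟪(h * ⟪z, B⟫_ℝ) • w + F B, u⟫_ℝ = μ := by
        rw [hev, inner_smul_left, huu]; simp
      rw [inner_add_left, inner_smul_left, hFG, ← hc] at e1
      rw [← e1, ← real_inner_self_eq_norm_sq]
      conv_rhs => rw [hB, inner_add_left, inner_smul_left, ← hB]
      rw [real_inner_comm B (G u)]
      simp; ring
    have h2 : μ = h ^ 2 * c ^ 2 + 2 * (h * c * ⟪z, G u⟫_ℝ) + ‖G u‖ ^ 2 := by
      rw [h1, hB, norm_add_sq_real, norm_smul, hz, inner_smul_left, Real.norm_eq_abs, mul_one,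
        sq_abs]
      simp only [RCLike.conj_to_real]
      ring
    have h3 : |⟪z, G u⟫_ℝ| ≤ f := by
      refine (abs_real_inner_le_norm _ _).trans ?_
      rwa [hz, one_mul]
    have h4 : |h * c * ⟪z, G u⟫_ℝ| ≤ h * f := by
      rw [abs_mul, abs_mul, abs_of_pos hh]
      have : h * |c| ≤ h := by nlinarith
      exact mul_le_mul this h3 (abs_nonneg _) hh.le
    have h5 : ‖G u‖ ^ 2 ≤ h * f / 2 := by nlinarith [norm_nonneg (G u)]
    have h6 : 0 ≤ ‖G u‖ ^ 2 := sq_nonneg _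
    obtain ⟨h7, h8⟩ := abs_le.1 h4
    rw [abs_le]; constructor <;> linarith
  -- hc q - p
  have hd : ‖(h * c) • q - p‖ ≤ 14 * (f ^ 2 / h) := by
    have e : μ • ((h * c) • q - p) = (h ^ 2 * c ^ 2 - μ) • p + (h * c) • g := by
      have : μ • ((h * c) • q - p) = (h * c) • (μ • q) - μ • p := by module
      rw [this, hμq]; module
    have h1 : μ * ‖(h * c) • q - p‖ ≤ 5 / 2 * (h * f) * f + h * f ^ 2 := by
      calc μ * ‖(h * c) • q - p‖ = ‖μ • ((h * c) • q - p)‖ := by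
            rw [norm_smul, Real.norm_of_nonneg hμ0.le]
        _ ≤ ‖(h ^ 2 * c ^ 2 - μ) • p‖ + ‖(h * c) • g‖ := by rw [e]; exact norm_add_le _ _
        _ ≤ _ := by
          refine add_le_add ?_ ?_
          · rw [norm_smul, Real.norm_eq_abs]
            exact mul_le_mul hμc hpn (norm_nonneg _) (by positivity)
          · rw [norm_smul, Real.norm_eq_abs, abs_mul, abs_of_pos hh]
            have : h * |c| ≤ h := by nlinarith
            exact mul_le_mul this hgn (norm_nonneg _) hh.le
    set D := ‖(h * c) • q - p‖
    have h2 : h ^ 2 / 4 * D ≤ μ * D := mul_le_mul_of_nonneg_right hμ4 (norm_nonneg _)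
    rw [← mul_div_assoc, le_div_iff₀ hh]
    have h3 : h * (D * h) ≤ h * (14 * f ^ 2) := by
      have e1 : h * (D * h) = 4 * (h ^ 2 / 4 * D) := by ring
      have e2 : h * (14 * f ^ 2) = 4 * (5 / 2 * (h * f) * f + h * f ^ 2) := by ring
      rw [e1, e2]
      linarith
    exact le_of_mul_le_mul_left h3 hh
  have inb : ∀ (y : U), |⟪ei, y⟫_ℝ| ≤ ‖y‖ := fun y =>
    (abs_real_inner_le_norm _ _).trans (by nlinarith [norm_nonneg y])
  have inbk : ∀ (y : V), |⟪y, ek⟫_ℝ| ≤ ‖y‖ := fun y =>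
    (abs_real_inner_le_norm _ _).trans (by nlinarith [norm_nonneg y])
  have hwi : |⟪ei, w⟫_ℝ| ≤ 1 := by have := inb w; rwa [hw] at this
  have hzk : |⟪z, ek⟫_ℝ| ≤ 1 := by have := inbk z; rwa [hz] at this
  have hqi : |⟪ei, q⟫_ℝ| ≤ ‖q‖ := inb q
  have hGw : |⟪G w, ek⟫_ℝ| ≤ f := by
    have := (inbk (G w)).trans (hG w); rwa [hw, mul_one] at this
  have hGq : |⟪G q, ek⟫_ℝ| ≤ f * ‖q‖ := (inbk (G q)).trans (hG q)
  have hdi : |⟪ei, (h * c) • q - p⟫_ℝ| ≤ 14 * (f ^ 2 / h) := (inb _).trans hd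
  have hsplit : ⟪ei, u⟫_ℝ * ⟪B, ek⟫_ℝ - h * ⟪ei, w⟫_ℝ * ⟪z, ek⟫_ℝ
      - (⟪ei, F z⟫_ℝ - ⟪ei, w⟫_ℝ * ⟪w, F z⟫_ℝ) * ⟪z, ek⟫_ℝ
      - ⟪ei, w⟫_ℝ * ⟪G w, ek⟫_ℝ
      = -(h * ‖q‖ ^ 2 * (⟪ei, w⟫_ℝ * ⟪z, ek⟫_ℝ)) + ⟪ei, (h * c) • q - p⟫_ℝ * ⟪z, ek⟫_ℝ
        + (-(‖q‖ ^ 2 * (⟪ei, w⟫_ℝ * ⟪G w, ek⟫_ℝ)) + c * (⟪ei, w⟫_ℝ * ⟪G q, ek⟫_ℝ)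
          + c * (⟪ei, q⟫_ℝ * ⟪G w, ek⟫_ℝ) + ⟪ei, q⟫_ℝ * ⟪G q, ek⟫_ℝ) := by
    have e1 : ⟪ei, u⟫_ℝ = c * ⟪ei, w⟫_ℝ + ⟪ei, q⟫_ℝ := by
      conv_lhs => rw [hu_eq]
      rw [inner_add_right, inner_smul_right]
    have e2 : ⟪B, ek⟫_ℝ = h * c * ⟪z, ek⟫_ℝ + c * ⟪G w, ek⟫_ℝ + ⟪G q, ek⟫_ℝ := by
      have : G u = c • G w + G q := by
        conv_lhs => rw [hu_eq]
        rw [map_add, map_smul]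
      rw [hB, this]
      simp only [inner_add_left, inner_smul_left]
      simp; ring
    have e3 : ‖q‖ ^ 2 = 1 - c ^ 2 := by linarith
    have e4 : ⟪ei, (h * c) • q - p⟫_ℝ
        = h * c * ⟪ei, q⟫_ℝ - (⟪ei, F z⟫_ℝ - ⟪w, F z⟫_ℝ * ⟪ei, w⟫_ℝ) := by
      rw [inner_sub_right ei ((h * c) • q) p, inner_smul_right, hp, inner_sub_right ei (F z),
        inner_smul_right]
    rw [e1, e2, e3, e4]
    ring
  rw [hsplit]
  have hqsq : ‖q‖ ^ 2 ≤ ‖q‖ := by nlinarith [norm_nonneg q]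
  have q0 := norm_nonneg q
  have b1 : |h * ‖q‖ ^ 2 * (⟪ei, w⟫_ℝ * ⟪z, ek⟫_ℝ)| ≤ 36 * (f ^ 2 / h) := by
    rw [abs_mul, abs_mul ⟪ei, w⟫_ℝ, abs_of_nonneg (by positivity : 0 ≤ h * ‖q‖ ^ 2)]
    calc h * ‖q‖ ^ 2 * (|⟪ei, w⟫_ℝ| * |⟪z, ek⟫_ℝ|) ≤ h * (6 * (f / h)) ^ 2 * (1 * 1) := by gcongr
      _ = 36 * (f ^ 2 / h) := by field_simp; ring
  have b2 : |⟪ei, (h * c) • q - p⟫_ℝ * ⟪z, ek⟫_ℝ| ≤ 14 * (f ^ 2 / h) * 1 := by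
    rw [abs_mul]
    exact mul_le_mul hdi hzk (abs_nonneg _) (by positivity)
  have hfq : f * ‖q‖ ≤ 6 * (f ^ 2 / h) := by
    calc f * ‖q‖ ≤ f * (6 * (f / h)) := by gcongr
      _ = 6 * (f ^ 2 / h) := by ring
  have b3 : |‖q‖ ^ 2 * (⟪ei, w⟫_ℝ * ⟪G w, ek⟫_ℝ)| ≤ f * ‖q‖ := by
    rw [abs_mul, abs_mul ⟪ei, w⟫_ℝ, abs_of_nonneg (by positivity : 0 ≤ ‖q‖ ^ 2)]
    calc ‖q‖ ^ 2 * (|⟪ei, w⟫_ℝ| * |⟪G w, ek⟫_ℝ|) ≤ ‖q‖ * (1 * f) := by gcongr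
      _ = f * ‖q‖ := by ring
  have b4 : |c * (⟪ei, w⟫_ℝ * ⟪G q, ek⟫_ℝ)| ≤ f * ‖q‖ := by
    rw [abs_mul, abs_mul ⟪ei, w⟫_ℝ]
    calc |c| * (|⟪ei, w⟫_ℝ| * |⟪G q, ek⟫_ℝ|) ≤ 1 * (1 * (f * ‖q‖)) := by gcongr
      _ = f * ‖q‖ := by ring
  have b5 : |c * (⟪ei, q⟫_ℝ * ⟪G w, ek⟫_ℝ)| ≤ f * ‖q‖ := by
    rw [abs_mul, abs_mul ⟪ei, q⟫_ℝ]
    calc |c| * (|⟪ei, q⟫_ℝ| * |⟪G w, ek⟫_ℝ|) ≤ 1 * (‖q‖ * f) := by gcongr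
      _ = f * ‖q‖ := by ring
  have b6 : |⟪ei, q⟫_ℝ * ⟪G q, ek⟫_ℝ| ≤ f * ‖q‖ := by
    rw [abs_mul]
    calc |⟪ei, q⟫_ℝ| * |⟪G q, ek⟫_ℝ| ≤ 1 * (f * ‖q‖) := by gcongr; exact hqi.trans hq1
      _ = f * ‖q‖ := by ring
  rw [abs_le] at *
  constructor <;> linarith [b1.1, b1.2, b2.1, b2.2, b3.1, b3.2, b4.1, b4.2, b5.1, b5.2, b6.1, b6.2]

lemma hankelize_abs_le {L K : ℕ} (Y : Matrix (Fin L) (Fin K) ℝ) (j : ℕ) (b : ℝ) (hb : 0 ≤ b)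
    (hY : ∀ i k, |Y i k| ≤ b) : |hankelize Y j| ≤ b := by
  unfold hankelize
  have hpos : (0 : ℝ) ≤ ∑ i : Fin L, ∑ k : Fin K, if (i : ℕ) + (k : ℕ) = j then (1 : ℝ) else 0 :=
    Finset.sum_nonneg fun i _ => Finset.sum_nonneg fun k _ => by split_ifs <;> norm_num
  rw [abs_div, abs_of_nonneg hpos]
  refine div_le_of_le_mul₀ hpos hb ?_
  rw [Finset.mul_sum]
  refine (Finset.abs_sum_le_sum_abs _ _).trans (Finset.sum_le_sum fun i _ => ?_)
  rw [Finset.mul_sum]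
  refine (Finset.abs_sum_le_sum_abs _ _).trans (Finset.sum_le_sum fun k _ => ?_)
  split_ifs
  · simpa using hY i k
  · simp

lemma hankelize_add {L K : ℕ} (Y Z : Matrix (Fin L) (Fin K) ℝ) (j : ℕ) :
    hankelize (Y + Z) j = hankelize Y j + hankelize Z j := by
  unfold hankelize
  rw [← add_div]
  congr 1
  simp only [← Finset.sum_add_distrib, Matrix.add_apply]
  refine Finset.sum_congr rfl fun i _ => Finset.sum_congr rfl fun k _ => ?_
  split_ifs <;> simp

lemma hankelize_smul {L K : ℕ} (c : ℝ) (Y : Matrix (Fin L) (Fin K) ℝ) (j : ℕ) :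
    hankelize (c • Y) j = c * hankelize Y j := by
  unfold hankelize
  rw [← mul_div_assoc]
  congr 1
  simp only [Finset.mul_sum, Matrix.smul_apply, smul_eq_mul]
  refine Finset.sum_congr rfl fun i _ => Finset.sum_congr rfl fun k _ => ?_
  split_ifs <;> simp

lemma hankelize_hankelOf {L K : ℕ} (x : ℕ → ℝ) (j : ℕ) (hL : 0 < L) (hK : 0 < K)
    (hj : j + 1 < L + K) : hankelize (hankelOf x L K) j = x j := by
  unfold hankelize
  have hpos : (0 : ℝ) < ∑ i : Fin L, ∑ k : Fin K, if (i : ℕ) + (k : ℕ) = j then (1 : ℝ) else 0 := by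
    have hn : ∀ (i : Fin L) (k : Fin K), (0 : ℝ) ≤ if (i : ℕ) + (k : ℕ) = j then (1 : ℝ) else 0 :=
      fun i k => by split_ifs <;> norm_num
    refine Finset.sum_pos' (fun i _ => Finset.sum_nonneg fun k _ => hn i k)
      ⟨⟨min j (L - 1), by omega⟩, Finset.mem_univ _, ?_⟩
    refine Finset.sum_pos' (fun k _ => hn _ k)
      ⟨⟨j - min j (L - 1), by omega⟩, Finset.mem_univ _, ?_⟩
    have : min j (L - 1) + (j - min j (L - 1)) = j := by omega
    simp [this]
  rw [div_eq_iff hpos.ne', Finset.mul_sum]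
  refine Finset.sum_congr rfl fun i _ => ?_
  rw [Finset.mul_sum]
  refine Finset.sum_congr rfl fun k _ => ?_
  split_ifs with h
  · simp [hankelOf, h]
  · simp

/-- The Euclidean linear map of a matrix. -/
noncomputable def euc {m n : ℕ} (A : Matrix (Fin m) (Fin n) ℝ) :
    EuclideanSpace ℝ (Fin n) →ₗ[ℝ] EuclideanSpace ℝ (Fin m) where
  toFun v := WithLp.toLp 2 (A *ᵥ v.ofLp)
  map_add' x y := by simp [Matrix.mulVec_add]
  map_smul' c x := by simp [Matrix.mulVec_smul]

lemma euc_apply {m n : ℕ} (A : Matrix (Fin m) (Fin n) ℝ) (v : EuclideanSpace ℝ (Fin n))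
    (i : Fin m) : euc A v i = ∑ k, A i k * v k := rfl

open scoped InnerProductSpace in
lemma inner_euc {m : ℕ} (x y : EuclideanSpace ℝ (Fin m)) : ⟪x, y⟫_ℝ = ∑ i, x i * y i := by
  rw [PiLp.inner_apply]
  refine Finset.sum_congr rfl fun i _ => ?_
  simp [mul_comm]

open scoped InnerProductSpace in
lemma euc_adj {m n : ℕ} (A : Matrix (Fin m) (Fin n) ℝ) (v : EuclideanSpace ℝ (Fin n))
    (u : EuclideanSpace ℝ (Fin m)) : ⟪euc A v, u⟫_ℝ = ⟪v, euc Aᵀ u⟫_ℝ := by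
  simp only [inner_euc, euc_apply, Finset.sum_mul, Finset.mul_sum, Matrix.transpose_apply]
  rw [Finset.sum_comm]
  refine Finset.sum_congr rfl fun i _ => Finset.sum_congr rfl fun k _ => ?_
  ring

lemma euc_norm_le {m n N : ℕ} (hm : m ≤ N) (hn : n ≤ N) (d : ℝ) (hd : 0 ≤ d)
    (A : Matrix (Fin m) (Fin n) ℝ)
    (hA : ∀ i k, |A i k| ≤ d) (v : EuclideanSpace ℝ (Fin n)) :
    ‖euc A v‖ ≤ d * N * ‖v‖ := by
  refine (sq_le_sq₀ (norm_nonneg _) (by positivity)).1 ?_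
  rw [EuclideanSpace.norm_sq_eq]
  have h1 : ∀ i, ‖euc A v i‖ ^ 2 ≤ d ^ 2 * N * ‖v‖ ^ 2 := by
    intro i
    rw [euc_apply, Real.norm_eq_abs, sq_abs]
    refine (Finset.sum_mul_sq_le_sq_mul_sq _ _ _).trans ?_
    have e1 : ∑ k, A i k ^ 2 ≤ d ^ 2 * N := by
      calc ∑ k, A i k ^ 2 ≤ ∑ _k : Fin n, d ^ 2 :=
            Finset.sum_le_sum fun k _ => by rw [← sq_abs]; gcongr; exact hA i k
        _ = d ^ 2 * n := by simp [mul_comm]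
        _ ≤ d ^ 2 * N := by gcongr
    have e2 : ∑ k, v k ^ 2 = ‖v‖ ^ 2 := by
      rw [EuclideanSpace.norm_sq_eq]; simp
    rw [e2]
    gcongr
  calc ∑ i, ‖euc A v i‖ ^ 2 ≤ ∑ _i : Fin m, d ^ 2 * N * ‖v‖ ^ 2 := Finset.sum_le_sum fun i _ => h1 i
    _ = m * (d ^ 2 * N * ‖v‖ ^ 2) := by simp
    _ ≤ N * (d ^ 2 * N * ‖v‖ ^ 2) := by gcongr
    _ = (d * N * ‖v‖) ^ 2 := by ring

lemma normSq_Wvec_pos (a : ℝ) (M : ℕ) (hM : 0 < M) (ha : 1 < a) :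
    (a ^ (M - 1)) ^ 2 ≤ normSq (Wvec a M) := by
  unfold normSq
  exact Finset.single_le_sum (f := fun i : Fin M => Wvec a M i ^ 2) (fun i _ => sq_nonneg _)
    (Finset.mem_univ (⟨M - 1, by omega⟩ : Fin M))

set_option maxHeartbeats 1000000 in
/-- Entrywise bound. -/
lemma entry_bound (a ξ φ δ : ℝ) (ha : 1 < a) (L K N : ℕ) (hL : 0 < L) (hK : 0 < K)
    (hLK : L + K = N + 1) (hbig : 2 * (|δ| * N) ≤ a ^ (N - 1)) (u : Fin L → ℝ)
    (hu : IsTopEigenvector (HdeltaSq a ξ φ δ L K) u) (i : Fin L) (k : Fin K) :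
    |(Matrix.vecMulVec u u * (hankelOf (expSignal a) L K + δ • hankelOf (cosNoise ξ φ) L K)) i k
      - hankelOf (expSignal a) L K i k
      - δ * ((((1 : Matrix (Fin L) (Fin L) ℝ) - (normSq (Wvec a L))⁻¹ • Matrix.vecMulVec (Wvec a L) (Wvec a L))
        * hankelOf (cosNoise ξ φ) L K * (hankelOf (expSignal a) L K)ᵀ *
        (((normSq (Wvec a L)) ^ 2 * normSq (Wvec a K))⁻¹ •
          Matrix.vecMulVec (Wvec a L) (Wvec a L)) * hankelOf (expSignal a) L K : Matrix (Fin L) (Fin K) ℝ) i k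
        + (((normSq (Wvec a L))⁻¹ • Matrix.vecMulVec (Wvec a L) (Wvec a L))
          * hankelOf (cosNoise ξ φ) L K) i k)| ≤ 74 * ((|δ| * N) ^ 2 / a ^ (N - 1)) := by
  have hnL := normSq_Wvec_pos a L hL ha
  have hnK := normSq_Wvec_pos a K hK ha
  have ha0 : 0 < a := by linarith
  set nL := normSq (Wvec a L) with hnLdef
  set nK := normSq (Wvec a K) with hnKdef
  set E := hankelOf (cosNoise ξ φ) L K with hE
  set H := hankelOf (expSignal a) L K with hH
  have hnL0 : 0 < nL := lt_of_lt_of_le (by positivity) hnL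
  have hnK0 : 0 < nK := lt_of_lt_of_le (by positivity) hnK
  set sL := Real.sqrt nL with hsL
  set sK := Real.sqrt nK with hsK
  have hsL0 : 0 < sL := Real.sqrt_pos.2 hnL0
  have hsK0 : 0 < sK := Real.sqrt_pos.2 hnK0
  have hsL2 : sL ^ 2 = nL := Real.sq_sqrt hnL0.le
  have hsK2 : sK ^ 2 = nK := Real.sq_sqrt hnK0.le
  have hsLge : a ^ (L - 1) ≤ sL := Real.le_sqrt_of_sq_le hnL
  have hsKge : a ^ (K - 1) ≤ sK := Real.le_sqrt_of_sq_le hnK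
  have hhge : a ^ (N - 1) ≤ sL * sK := by
    have : N - 1 = (L - 1) + (K - 1) := by omega
    rw [this, pow_add]
    gcongr
  set h := sL * sK with hh
  have hh0 : 0 < h := by positivity
  set f := |δ| * (N : ℝ) with hf
  have hf0 : 0 ≤ f := by positivity
  let w : EuclideanSpace ℝ (Fin L) := WithLp.toLp 2 fun i => sL⁻¹ * Wvec a L i
  let z : EuclideanSpace ℝ (Fin K) := WithLp.toLp 2 fun i => sK⁻¹ * Wvec a K i
  let U : EuclideanSpace ℝ (Fin L) := WithLp.toLp 2 u
  have hwi : ∀ i, w i = sL⁻¹ * Wvec a L i := fun _ => rfl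
  have hzi : ∀ i, z i = sK⁻¹ * Wvec a K i := fun _ => rfl
  have hUi : ∀ i, U i = u i := fun _ => rfl
  have nrm : ∀ (M : ℕ) (x : EuclideanSpace ℝ (Fin M)), ∑ i, x i ^ 2 = 1 → ‖x‖ = 1 := by
    intro M x hx
    have : ‖x‖ ^ 2 = 1 := by rw [EuclideanSpace.norm_sq_eq]; simpa using hx
    nlinarith [norm_nonneg x]
  have hw1 : ‖w‖ = 1 := by
    apply nrm
    simp only [hwi, mul_pow, ← Finset.mul_sum]
    change sL⁻¹ ^ 2 * nL = 1
    rw [← hsL2]; field_simp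
  have hz1 : ‖z‖ = 1 := by
    apply nrm
    simp only [hzi, mul_pow, ← Finset.mul_sum]
    change sK⁻¹ ^ 2 * nK = 1
    rw [← hsK2]; field_simp
  have hU1 : ‖U‖ = 1 := nrm _ _ hu.1
  have hHe : ∀ i k, H i k = h * (w i * z k) := by
    intro i k
    rw [hwi, hzi, hh]
    simp only [hH, hankelOf, expSignal, Wvec, Matrix.of_apply, pow_add]
    field_simp
  have hEb : ∀ i k, |(δ • E) i k| ≤ |δ| := by
    intro i k
    rw [Matrix.smul_apply, smul_eq_mul, abs_mul]
    exact mul_le_of_le_one_right (abs_nonneg _) (Real.abs_cos_le_one _)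
  have hF : ∀ v, ‖euc (δ • E) v‖ ≤ f * ‖v‖ :=
    euc_norm_le (by omega) (by omega) _ (abs_nonneg _) _ hEb
  have hG : ∀ v, ‖euc (δ • E)ᵀ v‖ ≤ f * ‖v‖ :=
    euc_norm_le (by omega) (by omega) _ (abs_nonneg _) _ fun i k => hEb k i
  obtain ⟨hu1, μ, hev, hmax⟩ := hu
  set A := H + δ • E with hA
  have hAB : HdeltaSq a ξ φ δ L K = A * Aᵀ := rfl
  rw [hAB] at hev hmax
  have hAe : ∀ v, euc A v = (h * inner ℝ z v) • w + euc (δ • E) v := by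
    intro v
    ext i
    rw [euc_apply, PiLp.add_apply, PiLp.smul_apply, smul_eq_mul, euc_apply, inner_euc,
      Finset.mul_sum, Finset.sum_mul, ← Finset.sum_add_distrib]
    refine Finset.sum_congr rfl fun k _ => ?_
    rw [hA, Matrix.add_apply, hHe]; ring
  have hATe : ∀ v, euc Aᵀ v = (h * inner ℝ w v) • z + euc (δ • E)ᵀ v := by
    intro v
    ext i
    rw [euc_apply, PiLp.add_apply, PiLp.smul_apply, smul_eq_mul, euc_apply, inner_euc,
      Finset.mul_sum, Finset.sum_mul, ← Finset.sum_add_distrib]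
    refine Finset.sum_congr rfl fun k _ => ?_
    rw [hA, Matrix.transpose_apply, Matrix.transpose_apply, Matrix.add_apply, hHe]; ring
  have hcomp : ∀ v, euc (A * Aᵀ) v = euc A (euc Aᵀ v) := by
    intro v
    change WithLp.toLp 2 ((A * Aᵀ) *ᵥ v.ofLp) = WithLp.toLp 2 (A *ᵥ (Aᵀ *ᵥ v.ofLp))
    rw [Matrix.mulVec_mulVec]
  have hevU : euc A (euc Aᵀ U) = μ • U := by
    rw [← hcomp]
    change WithLp.toLp 2 ((A * Aᵀ) *ᵥ u) = _
    rw [hev]; rfl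
  have hμ : (h - f) ^ 2 ≤ μ := by
    have hr := rayleigh_le_top (euc (A * Aᵀ)) (fun x y => by
      rw [euc_adj]; simp) μ (fun ν v hv hve => by
        refine hmax ν v.ofLp (fun h0 => hv (by ext i; simp [h0])) ?_
        have := congrArg WithLp.ofLp hve
        simpa [euc] using this) w
    rw [hcomp, euc_adj, real_inner_self_eq_norm_sq, hw1, one_pow, mul_one] at hr
    refine le_trans ?_ hr
    have hge : h - f ≤ ‖euc Aᵀ w‖ := by
      rw [hATe, real_inner_self_eq_norm_sq, hw1]
      have e1 : ‖(h * 1 ^ 2) • z‖ = h := by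
        rw [norm_smul, hz1, Real.norm_of_nonneg (by positivity)]; ring
      have e2 := hG w
      rw [hw1, mul_one] at e2
      have e3 := norm_sub_le_norm_add ((h * 1 ^ 2) • z) (euc (δ • E)ᵀ w)
      linarith
    have : 0 ≤ h - f := by linarith
    gcongr
  have key := core_bound (euc (δ • E)) (euc (δ • E)ᵀ) (euc_adj _) f h μ hf0 hh0 (by linarith)
    hF hG w U z hw1 hU1 hz1 (euc Aᵀ U) (hATe U) (by rw [← hAe]; exact hevU) hμ
    (EuclideanSpace.single i 1) (EuclideanSpace.single k 1) (by simp) (by simp)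
  refine le_trans (le_of_eq ?_) (key.trans ?_)
  swap
  · gcongr
  congr 1
  have si : ∀ y : EuclideanSpace ℝ (Fin L), inner ℝ (EuclideanSpace.single i (1 : ℝ)) y = y i := by
    intro y; simp [EuclideanSpace.inner_single_left]
  have sk : ∀ y : EuclideanSpace ℝ (Fin K), inner ℝ y (EuclideanSpace.single k (1 : ℝ)) = y k := by
    intro y; simp [EuclideanSpace.inner_single_right]
  simp only [si, sk]
  have t1 : (vecMulVec u u * A) i k = U i * (euc Aᵀ U) k := by
    rw [Matrix.mul_apply, euc_apply, Finset.mul_sum]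
    refine Finset.sum_congr rfl fun l _ => ?_
    rw [Matrix.vecMulVec_apply, Matrix.transpose_apply, hUi, hUi]; ring
  have t2 : ((nL⁻¹ • vecMulVec (Wvec a L) (Wvec a L)) * E) i k * δ
      = w i * (euc (δ • E)ᵀ w) k := by
    rw [Matrix.mul_apply, euc_apply, Finset.mul_sum, Finset.sum_mul]
    refine Finset.sum_congr rfl fun l _ => ?_
    rw [Matrix.smul_apply, Matrix.vecMulVec_apply, Matrix.transpose_apply, Matrix.smul_apply,
      hwi, hwi, ← hsL2]
    simp only [smul_eq_mul]
    field_simp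
  have hP : ∀ i l, (nL⁻¹ • vecMulVec (Wvec a L) (Wvec a L)) i l = w i * w l := by
    intro i l
    rw [Matrix.smul_apply, Matrix.vecMulVec_apply, hwi, hwi, ← hsL2, smul_eq_mul]
    field_simp
  have hS : Hᵀ * ((nL ^ 2 * nK)⁻¹ • vecMulVec (Wvec a L) (Wvec a L)) * H
      = Matrix.of fun k l => z k * z l := by
    have hww : ∑ i, w i * w i = 1 := by
      rw [← inner_euc, real_inner_self_eq_norm_sq, hw1, one_pow]
    have hS0 : ∀ i l, ((nL ^ 2 * nK)⁻¹ • vecMulVec (Wvec a L) (Wvec a L)) i l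
        = (h ^ 2)⁻¹ * (w i * w l) := by
      intro i l
      rw [Matrix.smul_apply, Matrix.vecMulVec_apply, hwi, hwi, ← hsL2, ← hsK2, smul_eq_mul, hh]
      field_simp
    ext k' l'
    rw [Matrix.mul_apply, Matrix.of_apply]
    have e1 : ∀ m, (Hᵀ * ((nL ^ 2 * nK)⁻¹ • vecMulVec (Wvec a L) (Wvec a L))) k' m
        = h⁻¹ * z k' * w m := by
      intro m
      rw [Matrix.mul_apply]
      calc _ = ∑ j, (w j * w j) * (h⁻¹ * z k' * w m) := by
            refine Finset.sum_congr rfl fun j _ => ?_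
            rw [hS0, Matrix.transpose_apply, hHe]; field_simp
        _ = _ := by rw [← Finset.sum_mul, hww, one_mul]
    calc _ = ∑ j, (w j * w j) * (z k' * z l') := by
            refine Finset.sum_congr rfl fun j _ => ?_
            rw [e1, hHe]; field_simp
        _ = _ := by rw [← Finset.sum_mul, hww, one_mul]
  have t3 : (((1 : Matrix (Fin L) (Fin L) ℝ) - nL⁻¹ • vecMulVec (Wvec a L) (Wvec a L)) * E * Hᵀ *
      ((nL ^ 2 * nK)⁻¹ • vecMulVec (Wvec a L) (Wvec a L)) * H : Matrix (Fin L) (Fin K) ℝ) i k * δ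
      = (euc (δ • E) z i - w i * inner ℝ w (euc (δ • E) z)) * z k := by
    rw [Matrix.mul_assoc _ Hᵀ, Matrix.mul_assoc _ (Hᵀ * _), hS, Matrix.sub_mul, Matrix.one_mul,
      Matrix.sub_mul, Matrix.sub_apply, sub_mul, sub_mul]
    have g1 : ∀ i, (E * Matrix.of fun k l => z k * z l) i k * δ = euc (δ • E) z i * z k := by
      intro i
      rw [Matrix.mul_apply, euc_apply, Finset.sum_mul, Finset.sum_mul]
      refine Finset.sum_congr rfl fun l _ => ?_
      rw [Matrix.of_apply, Matrix.smul_apply, smul_eq_mul]; ring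
    rw [g1, Matrix.mul_assoc, Matrix.mul_apply, inner_euc, Finset.mul_sum, Finset.sum_mul,
      Finset.sum_mul]
    congr 1
    refine Finset.sum_congr rfl fun l _ => ?_
    rw [mul_assoc, g1, hP]; ring
  rw [t1, hHe, mul_add, mul_comm δ, mul_comm δ, t2, t3]
  ring

lemma comb_apply {m n : ℕ} (X H Y Z : Matrix (Fin m) (Fin n) ℝ) (δ : ℝ) (i : Fin m) (k : Fin n) :
    (X + (-1 : ℝ) • H + (-1 : ℝ) • (δ • (Y + Z))) i k
      = X i k - H i k - δ * (Y i k + Z i k) := by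
  simp only [Matrix.add_apply, Matrix.smul_apply, smul_eq_mul]
  ring

/-- `r_j(N) = δ·ρ_j(N) + O(N² a^{-N})` uniformly in `0 ≤ j < N`. -/
theorem stmt_1 (a ξ φ α : ℝ) (ha : 1 < a) (hξ : ξ ∈ Set.Ioo 0 Real.pi)
    (hφ : φ ∈ Set.Ico 0 (2 * Real.pi)) (hα : α ∈ Set.Ioo (0 : ℝ) 1)
    (L K : ℕ → ℕ)
    (hLK : ∀ N, 3 ≤ N → 1 < L N ∧ L N ≤ K N ∧ L N + K N = N + 1)
    (hlim : Tendsto (fun N : ℕ => (L N : ℝ) / (N : ℝ)) atTop (nhds α))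
    (δ : ℝ) :
    ∃ C > (0 : ℝ), ∃ N₀ : ℕ, ∀ N, N₀ ≤ N →
      ∀ u : Fin (L N) → ℝ, IsTopEigenvector (HdeltaSq a ξ φ δ (L N) (K N)) u →
        ∀ j, j < N →
          |recErr a ξ φ δ (L N) (K N) u j - δ * rho a ξ φ (L N) (K N) j| ≤
            C * (N : ℝ) ^ 2 * a ^ (-(N : ℝ)) := by
  have ha0 : 0 < a := by linarith
  have hlim2 : Tendsto (fun n : ℕ => (2 * |δ| * a) * ((n : ℝ) ^ 1 / a ^ n)) atTop (nhds 0) := by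
    have := (tendsto_pow_const_div_const_pow_of_one_lt 1 ha).const_mul (2 * |δ| * a)
    simpa using this
  obtain ⟨N₁, hN₁⟩ := eventually_atTop.1 (hlim2.eventually_le_const (one_pos))
  refine ⟨74 * δ ^ 2 * a + 1, by positivity, max 3 N₁, ?_⟩
  intro N hN u hu j hj
  obtain ⟨hL, hK, hsum⟩ := hLK N (le_trans (le_max_left _ _) hN)
  have hpow : a ^ N = a ^ (N - 1) * a := by
    rw [← pow_succ]; congr 1; omega
  have hbig : 2 * (|δ| * N) ≤ a ^ (N - 1) := by
    have := hN₁ N (le_trans (le_max_right _ _) hN)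
    rw [← mul_div_assoc, div_le_one (by positivity), hpow] at this
    refine le_of_mul_le_mul_right ?_ ha0
    calc 2 * (|δ| * N) * a = 2 * |δ| * a * (N : ℝ) ^ 1 := by ring
      _ ≤ _ := this
  have hent := entry_bound a ξ φ δ ha (L N) (K N) N (by omega) (by omega) hsum hbig u hu
  have hHj : hankelize (hankelOf (expSignal a) (L N) (K N)) j = a ^ j :=
    hankelize_hankelOf _ _ (by omega) (by omega) (by omega)
  unfold recErr rho
  simp only
  rw [← hHj, ← hankelize_add, ← hankelize_smul, sub_eq_add_neg, sub_eq_add_neg,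
    ← neg_one_mul, ← neg_one_mul (hankelize (δ • _) j), ← hankelize_smul, ← hankelize_smul,
    ← hankelize_add, ← hankelize_add]
  refine (hankelize_abs_le _ _ (74 * ((|δ| * N) ^ 2 / a ^ (N - 1))) (by positivity) ?_).trans ?_
  · intro i k
    refine le_trans (le_of_eq ?_) (hent i k)
    rw [comb_apply]
  · rw [Real.rpow_neg ha0.le, Real.rpow_natCast, mul_pow, sq_abs]
    calc 74 * (δ ^ 2 * (N : ℝ) ^ 2 / a ^ (N - 1)) = 74 * δ ^ 2 * a * (N : ℝ) ^ 2 * (a ^ N)⁻¹ := by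
          rw [hpow]; field_simp
      _ ≤ _ := by gcongr; linarith
end
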